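/- Let k be a field in which f! ≠ 0, for a positive integer f. Then the polynomials binom(X, f), binom(X+1, f), …, binom(X+f-1, f) (where binom(X+n, f) = (X+n)(X+n-1)⋯(X+n-f+1)/f!) form a k-basis of the vector space of polynomials of degree at most f with zero constant term. -/

import Mathlib

open Polynomial

/-- The polynomial `binom(X + n, f) = (X+n)(X+n-1)⋯(X+n-f+1)/f!` over a field `k`. -/
noncomputable def binomPoly (k : Type*) [Field k] (f : ℕ) (n : ℕ) : k[X] :=
  C ((f.factorial : k)⁻¹) * ∏ j ∈ Finset.range f, (X + C (n : k) - C (j : k))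

lemma eval_binomPoly (k : Type*) [Field k] (f n : ℕ) (x : k) :
    (binomPoly k f n).eval x =
      (f.factorial : k)⁻¹ * ∏ j ∈ Finset.range f, (x + (n : k) - (j : k)) := by
  simp [binomPoly, eval_prod]

lemma degree_binomPoly_le (k : Type*) [Field k] (f n : ℕ) :
    (binomPoly k f n).degree ≤ f := by
  have hj : ∀ j ∈ Finset.range f, (X + C (n : k) - C (j : k)).natDegree ≤ 1 := fun j _ => by
    rw [add_sub_assoc, ← C_sub, natDegree_X_add_C]
  have hsum := Finset.sum_le_card_nsmul _ _ 1 hj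
  rw [Finset.card_range, smul_eq_mul, mul_one] at hsum
  exact degree_le_of_natDegree_le
    ((natDegree_C_mul_le _ _).trans ((natDegree_prod_le _ _).trans hsum))

lemma coeff_zero_binomPoly {k : Type*} [Field k] {f n : ℕ} (h : n < f) :
    (binomPoly k f n).coeff 0 = 0 := by
  rw [coeff_zero_eq_eval_zero, eval_binomPoly,
    Finset.prod_eq_zero (Finset.mem_range.2 h) (by simp), mul_zero]

lemma eval_binomPoly_eq_zero {k : Type*} [Field k] {f m n : ℕ} (hmn : m < n) (hn : n ≤ f) :
    (binomPoly k f n).eval (-((m : k) + 1)) = 0 := by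
  rw [eval_binomPoly, Finset.prod_eq_zero (i := n - m - 1) (Finset.mem_range.2 (by omega)),
    mul_zero]
  obtain ⟨d, rfl⟩ := Nat.exists_eq_add_of_lt hmn
  rw [show m + d + 1 - m - 1 = d by omega]
  push_cast
  ring

lemma eval_binomPoly_ne_zero {k : Type*} [Field k] {f : ℕ} (hfac : (f.factorial : k) ≠ 0)
    (n : ℕ) : (binomPoly k f n).eval (-((n : k) + 1)) ≠ 0 := by
  rw [eval_binomPoly]
  refine mul_ne_zero (inv_ne_zero hfac) (Finset.prod_ne_zero_iff.2 fun j hj h => hfac ?_)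
  have hj0 : ((j + 1 : ℕ) : k) = 0 := by
    push_cast
    linear_combination -h
  have hdvd : j + 1 ∣ f.factorial :=
    Nat.dvd_factorial j.succ_pos (Finset.mem_range.1 hj)
  exact zero_dvd_iff.1 (hj0 ▸ Nat.cast_dvd_cast hdvd)

lemma linearIndependent_binomPoly {k : Type*} [Field k] {f : ℕ}
    (hfac : (f.factorial : k) ≠ 0) :
    LinearIndependent k (fun n : Fin f => binomPoly k f (n : ℕ)) := by
  rw [Fintype.linearIndependent_iff]
  intro c hc m
  induction m using WellFoundedLT.induction with
  | ind m ih =>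
    have h := congrArg (eval (-(((m : ℕ) : k) + 1))) hc
    rw [eval_finsetSum, Finset.sum_eq_single m, eval_smul, smul_eq_mul, eval_zero] at h
    · exact (mul_eq_zero.1 h).resolve_right (eval_binomPoly_ne_zero hfac m)
    · intro n _ hnm
      rcases lt_or_gt_of_ne hnm with hlt | hgt
      · simp [ih n hlt]
      · rw [eval_smul, eval_binomPoly_eq_zero hgt n.2.le, smul_zero]
    · simp

lemma degreeLE_natCast_eq_degreeLT (k : Type*) [Field k] (f : ℕ) :
    degreeLE k (f : ℕ) = degreeLT k (f + 1) := by
  ext p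
  rw [mem_degreeLE, mem_degreeLT, ← natDegree_le_iff_degree_le, natDegree_le_iff_coeff_eq_zero,
    degree_lt_iff_coeff_zero]
  rfl

instance finite_degreeLT (k : Type*) [Field k] (n : ℕ) : Module.Finite k (degreeLT k n) :=
  .equiv (degreeLTEquiv k n).symm

/-- The polynomials of degree at most `f` with zero constant term form a space of dimension at
most `f`. -/
lemma finrank_degreeLE_inf_ker_lcoeff_zero_le (k : Type*) [Field k] (f : ℕ) :
    Module.finrank k
      ↥(degreeLE k (f : ℕ) ⊓ LinearMap.ker (lcoeff k 0)) ≤ f := by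
  have hlt : degreeLE k (f : ℕ) ⊓ LinearMap.ker (lcoeff k 0) < degreeLT k (f + 1) := by
    rw [← degreeLE_natCast_eq_degreeLT]
    refine inf_lt_left.2 fun h => ?_
    have h1 : (1 : k[X]) ∈ degreeLE k (f : ℕ) :=
      mem_degreeLE.2 (degree_one_le.trans (by exact_mod_cast f.zero_le))
    simpa using h h1
  have h := Submodule.finrank_lt_finrank_of_lt hlt
  rw [(degreeLTEquiv k (f + 1)).finrank_eq, Module.finrank_fin_fun] at h
  omega

/-- If `f! ≠ 0` in a field `k` and `f > 0`, then
`binom(X, f), binom(X+1, f), …, binom(X+f-1, f)` form a `k`-basis of the space of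
polynomials of degree at most `f` with zero constant term. -/
theorem binomPoly_basis
    (k : Type*) [Field k] (f : ℕ) (hf : 0 < f) (hfac : (f.factorial : k) ≠ 0) :
    LinearIndependent k (fun n : Fin f => binomPoly k f (n : ℕ)) ∧
    Submodule.span k (Set.range (fun n : Fin f => binomPoly k f (n : ℕ))) =
      Polynomial.degreeLE k (f : ℕ) ⊓ LinearMap.ker (Polynomial.lcoeff k 0) := by
  have hli := linearIndependent_binomPoly hfac
  have hfin : Module.Finite k
      ↥(degreeLE k (f : ℕ) ⊓ LinearMap.ker (lcoeff k 0)) :=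
    Submodule.finiteDimensional_of_le
      (inf_le_left.trans (degreeLE_natCast_eq_degreeLT k f).le)
  refine ⟨hli, Submodule.eq_of_le_of_finrank_le ?_ ?_⟩
  · rw [Submodule.span_le]
    rintro _ ⟨n, rfl⟩
    exact ⟨mem_degreeLE.2 (degree_binomPoly_le k f n), coeff_zero_binomPoly n.2⟩
  · rw [finrank_span_eq_card hli, Fintype.card_fin]
    exact finrank_degreeLE_inf_ker_lcoeff_zero_le k f
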